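/- Let d ≥ 2 and n be integers with n ≥ e^d, let ε > 0 satisfy 3·sqrt((ln n)/n) < ε, and let U be a random n×d matrix drawn from the symmetric measure on the Stiefel manifold St(n,d), with rows u_1,…,u_n (so the rows form a random Parseval frame in ℝ^d). Then the probability that there exists i ∈ {1,…,n} with |‖u_i‖ − sqrt(d/n)| ≥ ε is at most exp( − (n−2)·(ε − 3 sqrt((ln n)/n))² / 8 ). -/

import Mathlib

open MeasureTheory ProbabilityTheory Real Matrix

noncomputable section

/-- Matrices over a measurable space carry the (Borel) product measurable structure. -/
instance matrixMeasurableSpace {m n α : Type*} [MeasurableSpace α] :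
    MeasurableSpace (Matrix m n α) :=
  inferInstanceAs (MeasurableSpace (m → n → α))

/-- The Euclidean norm of the `i`-th row of an `n × d` real matrix. -/
def rowNorm {n d : ℕ} (U : Matrix (Fin n) (Fin d) ℝ) (i : Fin n) : ℝ :=
  Real.sqrt (∑ j : Fin d, (U i j) ^ 2)

/-- One-dimensional Gaussian integral of `exp (t x²)`. -/
lemma gauss_int (t : ℝ) (ht : t < 1 / 2) :
    Integrable (fun x : ℝ => Real.exp (t * x ^ 2)) (gaussianReal 0 1) ∧
    ∫ x, Real.exp (t * x ^ 2) ∂(gaussianReal 0 1) = (√(1 - 2 * t))⁻¹ := by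
  have key : ∀ x : ℝ, gaussianPDFReal 0 1 x * Real.exp (t * x ^ 2)
      = (√(2 * π))⁻¹ * Real.exp (-(1 / 2 - t) * x ^ 2) := by
    intro x
    rw [gaussianPDFReal]
    simp only [NNReal.coe_one, mul_one, sub_zero]
    rw [mul_assoc, ← Real.exp_add]
    congr 2
    ring
  constructor
  · rw [gaussianReal_of_var_ne_zero 0 one_ne_zero]
    unfold gaussianPDF
    rw [integrable_withDensity_iff_integrable_smul' (by fun_prop) (by simp)]
    have : (fun x : ℝ => (ENNReal.ofReal (gaussianPDFReal 0 1 x)).toReal • Real.exp (t * x ^ 2))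
        = fun x => (√(2 * π))⁻¹ * Real.exp (-(1 / 2 - t) * x ^ 2) := by
      ext x
      rw [ENNReal.toReal_ofReal (gaussianPDFReal_nonneg 0 1 x), smul_eq_mul, key]
    rw [this]
    exact (integrable_exp_neg_mul_sq (by linarith)).const_mul _
  · rw [integral_gaussianReal_eq_integral_smul one_ne_zero]
    simp only [smul_eq_mul, key]
    rw [integral_const_mul, integral_gaussian, ← Real.sqrt_inv, ← Real.sqrt_inv,
      ← Real.sqrt_mul (by positivity)]
    congr 1
    have : 1 - 2 * t ≠ 0 := by linarith
    have : 1 / 2 - t ≠ 0 := by linarith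
    field_simp

/-- Chernoff bound for a product Gaussian. -/
lemma gauss_pi (n d : ℕ) (hdn : d ≤ n) (s : ℝ) (hs : 0 ≤ s) (hs1 : s ≤ 1) :
    (Measure.pi (fun _ : Fin n => gaussianReal 0 1))
      {x | s * ∑ i, x i ^ 2 ≤ ∑ i, if i.val < d then x i ^ 2 else 0}
      ≤ ENNReal.ofReal (Real.exp (0.35 * d - (n - d) * s / 5)) := by
  set t : Fin n → ℝ := fun i => if i.val < d then 1 / 4 else -s / 4 with ht
  have ht2 : ∀ i, t i < 1 / 2 := by
    intro i; simp only [ht]; split_ifs <;> linarith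
  set ν := Measure.pi (fun _ : Fin n => gaussianReal 0 1)
  have hint : Integrable (fun x : Fin n → ℝ => ∏ i, Real.exp (t i * x i ^ 2)) ν :=
    Integrable.fintype_prod (f := fun i x => Real.exp (t i * x ^ 2))
      (fun i => (gauss_int (t i) (ht2 i)).1)
  have hval : ∫ x, ∏ i, Real.exp (t i * x i ^ 2) ∂ν = ∏ i, (√(1 - 2 * t i))⁻¹ := by
    rw [integral_fintype_prod_eq_prod (fun i (x : ℝ) => Real.exp (t i * x ^ 2))]
    exact Finset.prod_congr rfl fun i _ => (gauss_int (t i) (ht2 i)).2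
  have hle : ∏ i, (√(1 - 2 * t i))⁻¹ ≤ Real.exp (0.35 * d - (n - d) * s / 5) := by
    calc ∏ i, (√(1 - 2 * t i))⁻¹
        ≤ ∏ i : Fin n, Real.exp (if i.val < d then 0.35 else -s / 5) := by
          refine Finset.prod_le_prod (fun i _ => by positivity) fun i _ => ?_
          have hpos : 0 < 1 - 2 * t i := by linarith [ht2 i]
          have : (√(1 - 2 * t i))⁻¹ = Real.exp (-(Real.log (1 - 2 * t i) / 2)) := by
            rw [Real.exp_neg, ← Real.log_sqrt hpos.le, Real.exp_log (Real.sqrt_pos.2 hpos)]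
          rw [this, Real.exp_le_exp]
          simp only [ht]
          split_ifs with h
          · have h2 := Real.log_two_lt_d9
            have : (1 - 2 * (1 / 4) : ℝ) = 2⁻¹ := by norm_num
            rw [this, Real.log_inv]
            linarith
          · have h1 := Real.le_log_one_add_of_nonneg (x := s / 2) (by linarith)
            have h3 : (1 - 2 * (-s / 4) : ℝ) = 1 + s / 2 := by ring
            rw [h3]
            have h4 : 2 * s / 5 ≤ 2 * (s / 2) / (s / 2 + 2) := by
              rw [div_le_div_iff₀ (by norm_num) (by linarith)]
              nlinarith
            linarith
      _ = Real.exp (0.35 * d - (n - d) * s / 5) := by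
          rw [← Real.exp_sum]
          congr 1
          rw [Finset.sum_ite]
          simp only [Finset.sum_const, nsmul_eq_mul]
          have hc : (Finset.univ.filter (fun i : Fin n => i.val < d)).card = d := by
            rw [Fin.card_filter_val_lt]; simp [hdn]
          have hc2 : (Finset.univ.filter (fun i : Fin n => ¬ i.val < d)).card = n - d := by
            have := Finset.card_filter_add_card_filter_not (s := (Finset.univ : Finset (Fin n)))
              (fun i : Fin n => i.val < d)
            rw [hc] at this
            simp only [Finset.card_univ, Fintype.card_fin] at this
            omega
          rw [hc, hc2, Nat.cast_sub hdn]
          ring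
  calc ν {x | s * ∑ i, x i ^ 2 ≤ ∑ i, if i.val < d then x i ^ 2 else 0}
      ≤ ν {x | (1 : ENNReal) ≤ ENNReal.ofReal (∏ i, Real.exp (t i * x i ^ 2))} := by
        refine measure_mono fun x hx => ?_
        simp only [Set.mem_ofPred_eq] at hx ⊢
        rw [ENNReal.one_le_ofReal, ← Real.exp_sum, Real.one_le_exp_iff]
        have h1 : ∑ i, t i * x i ^ 2 = (1 / 4) * ((1 + s) * (∑ i, if i.val < d then x i ^ 2 else 0)
            - s * ∑ i, x i ^ 2) := by
          rw [Finset.mul_sum, Finset.mul_sum, ← Finset.sum_sub_distrib, Finset.mul_sum]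
          refine Finset.sum_congr rfl fun i _ => ?_
          simp only [ht]
          split_ifs <;> ring
        have h2 : 0 ≤ ∑ i : Fin n, if i.val < d then x i ^ 2 else 0 :=
          Finset.sum_nonneg fun i _ => by split_ifs <;> positivity
        rw [h1]
        nlinarith [mul_nonneg hs h2]
    _ ≤ (∫⁻ x, ENNReal.ofReal (∏ i, Real.exp (t i * x i ^ 2)) ∂ν) / 1 :=
        meas_ge_le_lintegral_div hint.aemeasurable.ennreal_ofReal one_ne_zero ENNReal.one_ne_top
    _ = ENNReal.ofReal (∏ i, (√(1 - 2 * t i))⁻¹) := by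
        rw [div_one, ← hval, ofReal_integral_eq_lintegral_ofReal hint]
        exact Filter.Eventually.of_forall fun x => Finset.prod_nonneg fun i _ => (Real.exp_pos _).le
    _ ≤ _ := ENNReal.ofReal_le_ofReal hle

/-- The `j`-th column as a Euclidean vector. -/
def colVec {n d : ℕ} (U : Matrix (Fin n) (Fin d) ℝ) (j : Fin d) : EuclideanSpace ℝ (Fin n) :=
  WithLp.toLp 2 (fun i => U i j)

lemma colVec_orthonormal {n d : ℕ} (U : Matrix (Fin n) (Fin d) ℝ) (hU : Uᵀ * U = 1) :
    Orthonormal ℝ (colVec U) := by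
  rw [orthonormal_iff_ite]
  intro i j
  have := congrFun (congrFun hU i) j
  rw [Matrix.mul_apply, Matrix.one_apply] at this
  rw [← this]
  simp [colVec, PiLp.inner_apply, mul_comm]

lemma rowNorm_le_one {n d : ℕ} (U : Matrix (Fin n) (Fin d) ℝ) (hU : Uᵀ * U = 1) (i : Fin n) :
    rowNorm U i ≤ 1 := by
  rw [rowNorm, Real.sqrt_le_one]
  have := (colVec_orthonormal U hU).sum_inner_products_le (s := Finset.univ)
    (x := EuclideanSpace.single i (1 : ℝ))
  simpa [colVec, EuclideanSpace.inner_single_right] using this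

/-- Gaussian measure of the cone of vectors correlated with the column space. -/
lemma gauss_cone {n d : ℕ} (hdn : d ≤ n) (U : Matrix (Fin n) (Fin d) ℝ) (hU : Uᵀ * U = 1)
    (s : ℝ) (hs : 0 ≤ s) (hs1 : s ≤ 1) :
    (stdGaussian (EuclideanSpace ℝ (Fin n)))
      {g | s * ∑ i, g i ^ 2 ≤ ∑ j, (∑ i, g i * U i j) ^ 2}
      ≤ ENNReal.ofReal (Real.exp (0.35 * d - (n - d) * s / 5)) := by
  have horth := colVec_orthonormal U hU
  set v : Fin n → EuclideanSpace ℝ (Fin n) :=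
    fun i => if h : i.val < d then colVec U ⟨i, h⟩ else 0 with hv
  have hvo : Orthonormal ℝ (({i : Fin n | i.val < d}).domRestrict v) := by
    have h2 := horth.comp (fun i : {i : Fin n | i.val < d} => (⟨i.1.1, i.2⟩ : Fin d))
      (by
        intro a b hab
        simp only [Fin.mk.injEq] at hab
        exact Subtype.ext (Fin.ext hab))
    convert h2 using 1
    ext1 i
    have : i.1.1 < d := i.2
    simp [hv, this]
  obtain ⟨b, hb⟩ := hvo.exists_orthonormalBasis_extension_of_card_eq (by simp)
  rw [stdGaussian_eq_map_pi_orthonormalBasis b, Measure.map_apply (by fun_prop)]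
  · refine le_trans (measure_mono fun x hx => ?_) (gauss_pi n d hdn s hs hs1)
    simp only [Set.mem_preimage, Set.mem_ofPred_eq] at hx ⊢
    set g : EuclideanSpace ℝ (Fin n) := ∑ i, x i • b i with hg
    have h1 : ∑ i, g i ^ 2 = ∑ i, x i ^ 2 := by
      rw [← EuclideanSpace.real_norm_sq_eq, ← b.sum_sq_inner_right]
      refine Finset.sum_congr rfl fun i _ => ?_
      rw [hg, b.orthonormal.inner_right_fintype]
    have h2 : ∑ j, (∑ i, g i * U i j) ^ 2 = ∑ i : Fin n, if i.val < d then x i ^ 2 else 0 := by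
      have h3 : ∀ j : Fin d, ∑ i, g i * U i j = x (Fin.castLE hdn j) := by
        intro j
        have h4 : b (Fin.castLE hdn j) = colVec U j := by
          rw [hb _ (by simp)]
          simp [hv]
        rw [← b.orthonormal.inner_right_fintype x (Fin.castLE hdn j), ← hg, h4]
        simp [colVec, PiLp.inner_apply]
      simp only [h3]
      rw [← Finset.sum_filter]
      refine Finset.sum_bij (fun j _ => Fin.castLE hdn j) (by simp)
        (fun a _ c _ h => Fin.castLE_injective hdn h) ?_ (by simp)
      intro i hi
      simp only [Finset.mem_filter] at hi
      exact ⟨⟨i, hi.2⟩, by simp, rfl⟩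
    rwa [h1, h2] at hx
  · exact measurableSet_le (by fun_prop) (by fun_prop)

/-- For any nonzero `g` there is an orthogonal matrix with `i`-th row `g / ‖g‖`. -/
lemma exists_orth {n : ℕ} (i : Fin n) (g : EuclideanSpace ℝ (Fin n)) (hg : g ≠ 0) :
    ∃ Q : Matrix (Fin n) (Fin n) ℝ, Qᵀ * Q = 1 ∧ ∀ k, Q i k = ‖g‖⁻¹ * g k := by
  have hvo : Orthonormal ℝ (({i} : Set (Fin n)).domRestrict
      (fun _ : Fin n => ‖g‖⁻¹ • g)) := by
    constructor
    · intro k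
      simp [norm_smul, hg]
    · intro a c hac
      exact absurd (Subsingleton.elim a c) hac
  obtain ⟨b, hb⟩ := hvo.exists_orthonormalBasis_extension_of_card_eq (by simp)
  refine ⟨Matrix.of fun k l => b k l, ?_, ?_⟩
  · rw [mul_eq_one_comm]
    ext k l
    have := (orthonormal_iff_ite.1 b.orthonormal) l k
    rw [Matrix.mul_apply, Matrix.one_apply]
    simp only [eq_comm (a := k)]
    rw [← this]
    simp [PiLp.inner_apply]
  · intro k
    simp [hb i rfl]

lemma measurable_entry {n d : ℕ} (i : Fin n) (j : Fin d) :
    Measurable (fun U : Matrix (Fin n) (Fin d) ℝ => U i j) :=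
  (measurable_pi_apply j).comp (measurable_pi_apply i)

lemma row_tail {n d : ℕ} (hdn : d ≤ n)
    (μ : Measure (Matrix (Fin n) (Fin d) ℝ)) [IsProbabilityMeasure μ]
    (hae : ∀ᵐ U ∂μ, Uᵀ * U = 1)
    (hinv : ∀ Q : Matrix (Fin n) (Fin n) ℝ, Qᵀ * Q = 1 →
      Measure.map (fun U => Q * U) μ = μ)
    (i : Fin n) (r : ℝ) (hr : 0 ≤ r) (hr1 : r ≤ 1) :
    μ {U | r ≤ rowNorm U i} ≤ ENNReal.ofReal (Real.exp (0.35 * d - (n - d) * r ^ 2 / 5)) := by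
  have hent := @measurable_entry n d
  set γ := stdGaussian (EuclideanSpace ℝ (Fin n))
  set S : Set (EuclideanSpace ℝ (Fin n) × Matrix (Fin n) (Fin d) ℝ) :=
    {p | r ^ 2 * ∑ k, p.1 k ^ 2 ≤ ∑ j, (∑ k, p.1 k * p.2 k j) ^ 2} with hS
  have hSm : MeasurableSet S := by
    have h2 : ∀ k j, Measurable
        (fun p : EuclideanSpace ℝ (Fin n) × Matrix (Fin n) (Fin d) ℝ => p.2 k j) :=
      fun k j => (hent k j).comp measurable_snd
    exact measurableSet_le (by fun_prop) (by fun_prop)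
  have hAeq : {U : Matrix (Fin n) (Fin d) ℝ | r ≤ rowNorm U i}
      = {U | r ^ 2 ≤ ∑ j, U i j ^ 2} := by
    ext U
    simp only [Set.mem_ofPred_eq, rowNorm]
    exact Real.le_sqrt hr (Finset.sum_nonneg fun j _ => sq_nonneg (U i j))
  have hAm : MeasurableSet {U : Matrix (Fin n) (Fin d) ℝ | r ^ 2 ≤ ∑ j, U i j ^ 2} :=
    measurableSet_le (by fun_prop) (by fun_prop)
  rw [hAeq]
  have hfib : ∀ g, μ {U | r ^ 2 ≤ ∑ j, U i j ^ 2} ≤ μ (Prod.mk g ⁻¹' S) := by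
    intro g
    by_cases hg : g = 0
    · subst hg
      refine measure_mono fun U _ => ?_
      simp [hS]
    · obtain ⟨Q, hQ, hQi⟩ := exists_orth i g hg
      have hQm : Measurable (fun U : Matrix (Fin n) (Fin d) ℝ => Q * U) := by
        refine measurable_pi_lambda _ fun a => measurable_pi_lambda _ fun c => ?_
        simp only [Matrix.mul_apply]
        fun_prop
      conv_lhs => rw [← hinv Q hQ, Measure.map_apply hQm hAm]
      refine measure_mono fun U hU => ?_
      simp only [Set.mem_preimage, Set.mem_ofPred_eq, hS, Matrix.mul_apply, hQi] at hU ⊢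
      have hgp : 0 < ‖g‖ := norm_pos_iff.2 hg
      have h1 : ∀ j, ∑ k, ‖g‖⁻¹ * g k * U k j = ‖g‖⁻¹ * ∑ k, g k * U k j := by
        intro j
        rw [Finset.mul_sum]
        exact Finset.sum_congr rfl fun k _ => by ring
      simp only [h1, mul_pow] at hU
      rw [← Finset.mul_sum, inv_pow, ← div_eq_inv_mul, le_div_iff₀ (by positivity),
        EuclideanSpace.real_norm_sq_eq] at hU
      exact hU
  calc μ {U | r ^ 2 ≤ ∑ j, U i j ^ 2}
      = ∫⁻ _g, μ {U | r ^ 2 ≤ ∑ j, U i j ^ 2} ∂γ := by simp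
    _ ≤ ∫⁻ g, μ (Prod.mk g ⁻¹' S) ∂γ := lintegral_mono hfib
    _ = (γ.prod μ) S := (Measure.prod_apply hSm).symm
    _ = ∫⁻ U, γ ((fun g => (g, U)) ⁻¹' S) ∂μ := Measure.prod_apply_symm hSm
    _ ≤ ∫⁻ _U, ENNReal.ofReal (Real.exp (0.35 * d - (n - d) * r ^ 2 / 5)) ∂μ := by
        refine lintegral_mono_ae ?_
        filter_upwards [hae] with U hU
        exact gauss_cone hdn U hU (r ^ 2) (by positivity) (by nlinarith)
    _ = _ := by simp

/-- **Concentration over the Stiefel manifold.**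
Let `μ` be the symmetric measure on the Stiefel manifold `St(n,d) = {U : Uᵀ U = I_d}`,
characterized as a probability measure on `n × d` matrices supported on `St(n,d)` and
invariant under left multiplication by every orthogonal `n × n` matrix. If `n ≥ e^d` and
`3·√((ln n)/n) < ε`, then the probability that some row `u_i` of a random `U ∼ μ`
satisfies `|‖u_i‖ - √(d/n)| ≥ ε` is at most
`exp(-(n-2)(ε - 3√((ln n)/n))²/8)`. -/
theorem stiefel_concentration_equal_norm
    (d n : ℕ) (hd : 2 ≤ d) (hn : Real.exp d ≤ n)
    (μ : Measure (Matrix (Fin n) (Fin d) ℝ)) [IsProbabilityMeasure μ]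
    (hsupp : μ {U : Matrix (Fin n) (Fin d) ℝ | Uᵀ * U = 1} = 1)
    (hinv : ∀ Q : Matrix (Fin n) (Fin n) ℝ, Qᵀ * Q = 1 →
      Measure.map (fun U => Q * U) μ = μ)
    (ε : ℝ) (hε : 3 * Real.sqrt (Real.log n / n) < ε) :
    μ {U : Matrix (Fin n) (Fin d) ℝ |
        ∃ i : Fin n, ε ≤ |rowNorm U i - Real.sqrt (d / n)|}
      ≤ ENNReal.ofReal
          (Real.exp (-((n - 2) * (ε - 3 * Real.sqrt (Real.log n / n)) ^ 2) / 8)) := by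
  have hent := @measurable_entry n d
  have hd' : (2 : ℝ) ≤ d := by exact_mod_cast hd
  -- `7 d / 2 ≤ n`
  have h7 : (7 / 2 : ℝ) * d ≤ n := by
    have h1 : Real.exp d = Real.exp 1 * Real.exp 1 * Real.exp (d - 2) := by
      rw [← Real.exp_add, ← Real.exp_add]; congr 1; ring
    have h2 := Real.exp_one_gt_d9
    have h3 := Real.add_one_le_exp ((d : ℝ) - 2)
    have h4 : (7 : ℝ) ≤ Real.exp 1 * Real.exp 1 := by nlinarith
    have h5 : 7 * ((d : ℝ) - 1) ≤ Real.exp 1 * Real.exp 1 * Real.exp (d - 2) :=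
      mul_le_mul h4 (by linarith) (by linarith) (by positivity)
    linarith
  have hnpos : (0 : ℝ) < n := by linarith
  have hdn : d ≤ n := by
    have : (d : ℝ) ≤ n := by linarith
    exact_mod_cast this
  have hlog : (d : ℝ) ≤ Real.log n := (Real.le_log_iff_exp_le hnpos).2 hn
  set q := √((d : ℝ) / n) with hq
  set l := √(Real.log n / n) with hl
  have hql : q ≤ l := Real.sqrt_le_sqrt (by gcongr)
  have hq0 : 0 ≤ q := Real.sqrt_nonneg _
  have hq2 : n * q ^ 2 = d := by
    rw [hq, Real.sq_sqrt (by positivity)]; field_simp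
  have hl2 : n * l ^ 2 = Real.log n := by
    rw [hl, Real.sq_sqrt (div_nonneg (by linarith) hnpos.le)]; field_simp
  have hae : ∀ᵐ U ∂μ, Uᵀ * U = 1 := by
    have hm : MeasurableSet {U : Matrix (Fin n) (Fin d) ℝ | Uᵀ * U = 1} := by
      have : {U : Matrix (Fin n) (Fin d) ℝ | Uᵀ * U = 1} =
          ⋂ a, ⋂ c, {U | ∑ k, U k a * U k c = (1 : Matrix (Fin d) (Fin d) ℝ) a c} := by
        ext U
        simp only [Set.mem_ofPred_eq, Set.mem_iInter, ← Matrix.ext_iff, Matrix.mul_apply,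
          Matrix.transpose_apply]
      rw [this]
      exact MeasurableSet.iInter fun a => MeasurableSet.iInter fun c =>
        measurableSet_eq_fun (by fun_prop) measurable_const
    exact (mem_ae_iff_prob_eq_one hm).2 hsupp
  set r := q + ε with hr
  have hεpos : 0 < ε := by linarith
  have hsub : {U : Matrix (Fin n) (Fin d) ℝ | ∃ i : Fin n, ε ≤ |rowNorm U i - q|}
      ⊆ ⋃ i, {U | r ≤ rowNorm U i} := by
    rintro U ⟨i, hi⟩
    refine Set.mem_iUnion.2 ⟨i, ?_⟩
    have h0 : 0 ≤ rowNorm U i := Real.sqrt_nonneg _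
    simp only [Set.mem_ofPred_eq]
    rcases le_abs.1 hi with h | h <;> linarith
  refine (measure_mono hsub).trans ((measure_iUnion_fintype_le _ _).trans ?_)
  by_cases hr1 : r ≤ 1
  · calc ∑ i, μ {U | r ≤ rowNorm U i}
        ≤ ∑ _i : Fin n, ENNReal.ofReal (Real.exp (0.35 * d - (n - d) * r ^ 2 / 5)) :=
          Finset.sum_le_sum fun i _ => row_tail hdn μ hae hinv i r (by linarith) hr1
      _ = ENNReal.ofReal (n * Real.exp (0.35 * d - (n - d) * r ^ 2 / 5)) := by
          rw [Finset.sum_const, Finset.card_univ, Fintype.card_fin, nsmul_eq_mul,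
            ENNReal.ofReal_mul hnpos.le, ENNReal.ofReal_natCast]
      _ ≤ _ := by
          refine ENNReal.ofReal_le_ofReal ?_
          have e0 : n * Real.exp (0.35 * d - (n - d) * r ^ 2 / 5)
              = Real.exp (Real.log n + (0.35 * d - (n - d) * r ^ 2 / 5)) := by
            rw [Real.exp_add, Real.exp_log hnpos]
          rw [e0, Real.exp_le_exp]
          obtain ⟨a, ha⟩ : ∃ a, a = ε - 3 * l := ⟨_, rfl⟩
          have ha0 : 0 < a := by linarith
          rw [← ha]
          have hεa : ε = a + 3 * l := by linarith
          have hl0 : 0 ≤ l := Real.sqrt_nonneg _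
          have e1 : 7 * d + (9 * Real.log n + n * a ^ 2) ≤ n * r ^ 2 := by
            have e2 : 7 * q ^ 2 + (9 * l ^ 2 + a ^ 2) ≤ r ^ 2 := by
              rw [hr, hεa]
              nlinarith [mul_nonneg hq0 (sub_nonneg.2 hql), mul_nonneg hq0 ha0.le,
                mul_nonneg hl0 ha0.le]
            have := mul_le_mul_of_nonneg_left e2 hnpos.le
            linarith
          have e3 : n * r ^ 2 / 7 ≤ (n - d) * r ^ 2 / 5 := by
            nlinarith [sq_nonneg r]
          have e4 : 0 ≤ n * a ^ 2 := by positivity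
          have e5 : 0 ≤ a ^ 2 := by positivity
          linarith
  · have : ∀ i, μ {U | r ≤ rowNorm U i} = 0 := by
      intro i
      refine measure_mono_null ?_ (ae_iff.1 hae)
      intro U hU hU1
      exact hr1 (le_trans hU (rowNorm_le_one U hU1 i))
    simp [this]
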